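/- Let Ω ⊆ ℝ be open, F ∈ C¹ with semiflow φ defined for all t ≥ 0, h continuous, ρ p-admissible, and suppose for every x ∈ Ω₁ = {F ≠ 0} there exists t̄ > 0 with x ∉ φ(t̄, Ω). Then the weighted composition semigroup T_{F,h} is stable on L^p_ρ(Ω) if and only if (1) T_{F,h} is bounded, and (2) whenever λ(Ω₀) > 0 one has h(x) < 0 for λ-a.e. x ∈ Ω₀, where Ω₀ = {F = 0}. -/

import Mathlib

open MeasureTheory Filter Topology

/-- The cocycle h_t(x) = exp(∫₀^t h(φ(s,x)) ds). -/
noncomputable def cocycle (h : ℝ → ℝ) (φ : ℝ → ℝ → ℝ) (t x : ℝ) : ℝ :=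
  Real.exp (∫ s in (0:ℝ)..t, h (φ s x))

lemma sol_lip {Ω : Set ℝ} {F : ℝ → ℝ} (hF : ContDiffOn ℝ 1 F Ω) {u v : ℝ → ℝ} {T t₀ : ℝ}
    (ht₀ : t₀ ∈ Set.Icc 0 T)
    (hu : ContinuousOn u (Set.Icc 0 T)) (hv : ContinuousOn v (Set.Icc 0 T))
    (huΩ : ∀ t ∈ Set.Icc 0 T, u t ∈ Ω) (hvΩ : ∀ t ∈ Set.Icc 0 T, v t ∈ Ω)
    (he : u t₀ = v t₀) :
    ∃ K, LipschitzOnWith K F (u '' Set.Icc 0 T ∪ v '' Set.Icc 0 T) := by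
  have hsub : u '' Set.Icc 0 T ∪ v '' Set.Icc 0 T ⊆ Ω := by
    rintro _ (⟨t, ht, rfl⟩ | ⟨t, ht, rfl⟩)
    · exact huΩ t ht
    · exact hvΩ t ht
  have hc : IsCompact (u '' Set.Icc 0 T ∪ v '' Set.Icc 0 T) :=
    (isCompact_Icc.image_of_continuousOn hu).union (isCompact_Icc.image_of_continuousOn hv)
  have hpc : IsPreconnected (u '' Set.Icc 0 T ∪ v '' Set.Icc 0 T) :=
    IsPreconnected.union (u t₀) ⟨t₀, ht₀, rfl⟩ ⟨t₀, ht₀, he.symm⟩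
      (isPreconnected_Icc.image _ hu) (isPreconnected_Icc.image _ hv)
  exact (hF.mono hsub).exists_lipschitzOnWith (by norm_num)
    (Set.OrdConnected.convex hpc.ordConnected) hc

lemma sol_unique {Ω : Set ℝ} {F : ℝ → ℝ} (hF : ContDiffOn ℝ 1 F Ω) {u v : ℝ → ℝ}
    (hu : ∀ t, 0 ≤ t → HasDerivWithinAt u (F (u t)) (Set.Ici 0) t)
    (hv : ∀ t, 0 ≤ t → HasDerivWithinAt v (F (v t)) (Set.Ici 0) t)
    (huΩ : ∀ t, 0 ≤ t → u t ∈ Ω) (hvΩ : ∀ t, 0 ≤ t → v t ∈ Ω)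
    (he : u 0 = v 0) {T : ℝ} (hT : 0 ≤ T) : u T = v T := by
  have hcu : ContinuousOn u (Set.Icc 0 T) := fun t ht =>
    (hu t ht.1).continuousWithinAt.mono Set.Icc_subset_Ici_self
  have hcv : ContinuousOn v (Set.Icc 0 T) := fun t ht =>
    (hv t ht.1).continuousWithinAt.mono Set.Icc_subset_Ici_self
  obtain ⟨K, hK⟩ := sol_lip hF (t₀ := 0) ⟨le_rfl, hT⟩ hcu hcv (fun t ht => huΩ t ht.1)
    (fun t ht => hvΩ t ht.1) he
  exact ODE_solution_unique_of_mem_Icc_right (v := fun _ => F)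
    (s := fun _ => u '' Set.Icc 0 T ∪ v '' Set.Icc 0 T) (fun _ _ => hK) hcu
    (fun t ht => (hu t ht.1).mono (Set.Ici_subset_Ici.2 ht.1))
    (fun t ht => Or.inl ⟨t, ⟨ht.1, ht.2.le⟩, rfl⟩) hcv
    (fun t ht => (hv t ht.1).mono (Set.Ici_subset_Ici.2 ht.1))
    (fun t ht => Or.inr ⟨t, ⟨ht.1, ht.2.le⟩, rfl⟩) he ⟨hT, le_rfl⟩

lemma sol_inj {Ω : Set ℝ} {F : ℝ → ℝ} (hF : ContDiffOn ℝ 1 F Ω) {u v : ℝ → ℝ}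
    (hu : ∀ t, 0 ≤ t → HasDerivWithinAt u (F (u t)) (Set.Ici 0) t)
    (hv : ∀ t, 0 ≤ t → HasDerivWithinAt v (F (v t)) (Set.Ici 0) t)
    (huΩ : ∀ t, 0 ≤ t → u t ∈ Ω) (hvΩ : ∀ t, 0 ≤ t → v t ∈ Ω)
    {T : ℝ} (hT : 0 ≤ T) (he : u T = v T) : u 0 = v 0 := by
  have hcu : ContinuousOn u (Set.Icc 0 T) := fun t ht =>
    (hu t ht.1).continuousWithinAt.mono Set.Icc_subset_Ici_self
  have hcv : ContinuousOn v (Set.Icc 0 T) := fun t ht =>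
    (hv t ht.1).continuousWithinAt.mono Set.Icc_subset_Ici_self
  obtain ⟨K, hK⟩ := sol_lip hF (t₀ := T) ⟨hT, le_rfl⟩ hcu hcv (fun t ht => huΩ t ht.1)
    (fun t ht => hvΩ t ht.1) he
  exact ODE_solution_unique_of_mem_Icc_left (v := fun _ => F)
    (s := fun _ => u '' Set.Icc 0 T ∪ v '' Set.Icc 0 T) (fun _ _ => hK) hcu
    (fun t ht => ((hu t ht.1.le).hasDerivAt (Ici_mem_nhds ht.1)).hasDerivWithinAt)
    (fun t ht => Or.inl ⟨t, ⟨ht.1.le, ht.2⟩, rfl⟩) hcv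
    (fun t ht => ((hv t ht.1.le).hasDerivAt (Ici_mem_nhds ht.1)).hasDerivWithinAt)
    (fun t ht => Or.inr ⟨t, ⟨ht.1.le, ht.2⟩, rfl⟩) he ⟨le_rfl, hT⟩

/-- The semigroup property, from uniqueness. -/
lemma flow_add {Ω : Set ℝ} {F : ℝ → ℝ} (hF : ContDiffOn ℝ 1 F Ω) {φ : ℝ → ℝ → ℝ}
    (hφ0 : ∀ x ∈ Ω, φ 0 x = x)
    (hmem : ∀ t : ℝ, 0 ≤ t → ∀ x ∈ Ω, φ t x ∈ Ω)
    (hode : ∀ x ∈ Ω, ∀ t : ℝ, 0 ≤ t →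
      HasDerivWithinAt (fun s => φ s x) (F (φ t x)) (Set.Ici 0) t)
    {s t x : ℝ} (hs : 0 ≤ s) (ht : 0 ≤ t) (hx : x ∈ Ω) : φ (t + s) x = φ t (φ s x) := by
  refine sol_unique hF (u := fun r => φ (r + s) x) (v := fun r => φ r (φ s x))
    ?_ (hode _ (hmem s hs x hx)) (fun r hr => hmem _ (by positivity) x hx)
    (fun r hr => hmem r hr _ (hmem s hs x hx)) ?_ ht
  · intro r hr
    have h1 := hode x hx (r + s) (by positivity)
    have h2 : HasDerivWithinAt (fun r : ℝ => r + s) 1 (Set.Ici 0) r :=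
      ((hasDerivAt_id r).add_const s).hasDerivWithinAt
    have := HasDerivWithinAt.scomp r h1 h2 (fun y hy => by
      simp only [Set.mem_Ici] at hy ⊢; positivity)
    simpa [Function.comp_def] using this
  · simp [hφ0 _ (hmem s hs x hx)]

lemma flow_fix {Ω : Set ℝ} {F : ℝ → ℝ} (hF : ContDiffOn ℝ 1 F Ω) {φ : ℝ → ℝ → ℝ}
    (hφ0 : ∀ x ∈ Ω, φ 0 x = x)
    (hmem : ∀ t : ℝ, 0 ≤ t → ∀ x ∈ Ω, φ t x ∈ Ω)
    (hode : ∀ x ∈ Ω, ∀ t : ℝ, 0 ≤ t →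
      HasDerivWithinAt (fun s => φ s x) (F (φ t x)) (Set.Ici 0) t)
    {t x : ℝ} (ht : 0 ≤ t) (hx : x ∈ Ω) (hFx : F x = 0) : φ t x = x := by
  refine sol_unique hF (u := fun r => φ r x) (v := fun _ => x)
    (hode _ hx) (fun r _ => ?_) (fun r hr => hmem r hr x hx) (fun _ _ => hx) (hφ0 x hx) ht
  rw [hFx]; exact hasDerivWithinAt_const _ _ _

lemma flow_inj {Ω : Set ℝ} {F : ℝ → ℝ} (hF : ContDiffOn ℝ 1 F Ω) {φ : ℝ → ℝ → ℝ}
    (hφ0 : ∀ x ∈ Ω, φ 0 x = x)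
    (hmem : ∀ t : ℝ, 0 ≤ t → ∀ x ∈ Ω, φ t x ∈ Ω)
    (hode : ∀ x ∈ Ω, ∀ t : ℝ, 0 ≤ t →
      HasDerivWithinAt (fun s => φ s x) (F (φ t x)) (Set.Ici 0) t)
    {t : ℝ} (ht : 0 ≤ t) : Set.InjOn (φ t) Ω := by
  intro x hx y hy hxy
  have := sol_inj hF (u := fun r => φ r x) (v := fun r => φ r y) (hode x hx) (hode y hy)
    (fun r hr => hmem r hr x hx) (fun r hr => hmem r hr y hy) ht hxy
  simpa [hφ0 x hx, hφ0 y hy] using this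

lemma cocycle_aemeas {Ω : Set ℝ} (hΩ : IsOpen Ω) {h : ℝ → ℝ} (hh : ContinuousOn h Ω)
    {φ : ℝ → ℝ → ℝ}
    (hmem : ∀ t : ℝ, 0 ≤ t → ∀ x ∈ Ω, φ t x ∈ Ω)
    (hcont : ∀ x ∈ Ω, ContinuousOn (fun s => φ s x) (Set.Ici 0))
    (hdiff : ∀ t : ℝ, 0 ≤ t → ∀ᵐ x ∂(volume.restrict Ω), DifferentiableAt ℝ (φ t) x)
    {t : ℝ} (ht : 0 ≤ t) : AEMeasurable (cocycle h φ t) (volume.restrict Ω) := by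
  classical
  set S : Set ℝ := Ω ∩ ⋂ q : ℚ, {x | DifferentiableAt ℝ (φ (max (q:ℝ) 0)) x} with hS
  have hSm : MeasurableSet S :=
    hΩ.measurableSet.inter (MeasurableSet.iInter fun q => measurableSet_of_differentiableAt ℝ _)
  have hSΩ : S ⊆ Ω := Set.inter_subset_left
  have hae : ∀ᵐ x ∂(volume.restrict Ω), x ∈ S := by
    have h1 : ∀ᵐ x ∂(volume.restrict Ω), ∀ q : ℚ, DifferentiableAt ℝ (φ (max (q:ℝ) 0)) x :=
      ae_all_iff.2 fun q => hdiff _ (le_max_right _ _)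
    filter_upwards [h1, ae_restrict_mem hΩ.measurableSet] with x hx hxΩ
    exact ⟨hxΩ, Set.mem_iInter.2 hx⟩
  set u : ℝ → ℝ → ℝ := fun s => S.piecewise (fun x => h (φ (max s 0) x)) (fun _ => 0) with hu
  have huc : ∀ x, Continuous fun s => u s x := by
    intro x
    by_cases hx : x ∈ S
    · simp only [hu, Set.piecewise_eq_of_mem _ _ _ hx]
      have h1 : Continuous fun s : ℝ => φ (max s 0) x :=
        (hcont x (hSΩ hx)).comp_continuous (by fun_prop) (fun s => le_max_right s 0)
      exact hh.comp_continuous h1 (fun s => hmem _ (le_max_right _ _) x (hSΩ hx))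
    · simp only [hu, Set.piecewise_eq_of_notMem _ _ _ hx]
      exact continuous_const
  have huq : ∀ q : ℚ, Measurable (u q) := by
    intro q
    refine ContinuousOn.measurable_piecewise ?_ continuousOn_const hSm
    refine hh.comp (fun x hx => ?_) (fun x hx => hmem _ (le_max_right _ _) x (hSΩ hx))
    have : DifferentiableAt ℝ (φ (max (q:ℝ) 0)) x := Set.mem_iInter.1 hx.2 q
    exact this.continuousAt.continuousWithinAt
  have hum : ∀ s, Measurable (u s) := by
    intro s
    obtain ⟨q, -, -, hq⟩ := Real.exists_seq_rat_strictMono_tendsto s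
    refine measurable_of_tendsto_metrizable (fun n => huq (q n)) ?_
    rw [tendsto_pi_nhds]
    intro x
    exact ((huc x).tendsto s).comp hq
  have hjm : Measurable (Function.uncurry u) :=
    measurable_uncurry_of_continuous_of_measurable huc hum
  have hint : Measurable fun x => ∫ s in Set.Ioc 0 t, u s x :=
    (hjm.stronglyMeasurable.integral_prod_left (μ := volume.restrict (Set.Ioc 0 t))).measurable
  refine ⟨_, Real.measurable_exp.comp hint, ?_⟩
  filter_upwards [hae] with x hx
  simp only [cocycle, Function.comp, intervalIntegral.integral_of_le ht]
  congr 1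
  refine setIntegral_congr_fun measurableSet_Ioc fun s hs => ?_
  simp only [hu, Set.piecewise_eq_of_mem _ _ _ hx, max_eq_left hs.1.le]

lemma wc_bound {Ω : Set ℝ} (hΩ : IsOpen Ω) {p : ℝ} {ψ c ρ : ℝ → ℝ}
    (hinj : Set.InjOn ψ Ω) (hmaps : ∀ x ∈ Ω, ψ x ∈ Ω)
    (hdiff : ∀ᵐ x ∂(volume.restrict Ω), DifferentiableAt ℝ ψ x)
    (hc : AEMeasurable c (volume.restrict Ω))
    (hρpos : ∀ x ∈ Ω, 0 < ρ x) (hρmeas : Measurable ρ) {C : ℝ} (hC : 0 ≤ C)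
    (hadm : ∀ᵐ x ∂(volume.restrict Ω), |c x| ^ p * ρ x ≤ C * ρ (ψ x) * |deriv ψ x|)
    {f : ℝ → ℝ} (hf : Measurable f) (hfi : IntegrableOn (fun x => |f x| ^ p * ρ x) Ω) :
    IntegrableOn (fun x => |c x * f (ψ x)| ^ p * ρ x) Ω ∧
      ∫ x in Ω, |c x * f (ψ x)| ^ p * ρ x ≤ C * ∫ x in Ω, |f x| ^ p * ρ x := by
  set S : Set ℝ := Ω ∩ {x | DifferentiableAt ℝ ψ x} with hS
  have hSm : MeasurableSet S := hΩ.measurableSet.inter (measurableSet_of_differentiableAt ℝ _)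
  have hSΩ : S ⊆ Ω := Set.inter_subset_left
  have hSae : S =ᵐ[volume] Ω := by
    have := (ae_restrict_iff' hΩ.measurableSet).1 hdiff
    filter_upwards [this] with x hx
    exact propext ⟨fun h => h.1, fun h => ⟨h, hx h⟩⟩
  have hres : volume.restrict S = volume.restrict Ω := Measure.restrict_congr_set hSae
  have hder : ∀ x ∈ S, HasDerivWithinAt ψ (deriv ψ x) S x := fun x hx =>
    (DifferentiableAt.hasDerivAt hx.2).hasDerivWithinAt
  have hinjS : Set.InjOn ψ S := hinj.mono hSΩ
  have himg : ψ '' S ⊆ Ω := by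
    rintro _ ⟨x, hx, rfl⟩; exact hmaps x (hSΩ hx)
  have hψm : AEMeasurable ψ (volume.restrict Ω) := by
    rw [← hres]
    exact ContinuousOn.aemeasurable (fun x hx =>
      (DifferentiableAt.continuousAt hx.2).continuousWithinAt) hSm
  have hg := (integrableOn_image_iff_integrableOn_abs_deriv_smul hSm hder hinjS
    (fun x => |f x| ^ p * ρ x)).1 (hfi.mono_set himg)
  have hgi := integral_image_eq_integral_abs_deriv_smul hSm hder hinjS
    (fun x => |f x| ^ p * ρ x)
  have hg' : IntegrableOn (fun x => C * (|deriv ψ x| • (|f (ψ x)| ^ p * ρ (ψ x)))) Ω := by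
    rw [IntegrableOn, ← hres]; exact hg.const_mul C
  have hmeas : AEStronglyMeasurable (fun x => |c x * f (ψ x)| ^ p * ρ x) (volume.restrict Ω) := by
    have h1 : AEMeasurable (fun x => c x * f (ψ x)) (volume.restrict Ω) :=
      hc.mul (hf.comp_aemeasurable hψm)
    have h2 : AEMeasurable (fun x => |c x * f (ψ x)| ^ p) (volume.restrict Ω) :=
      (h1.abs).pow_const p
    exact (h2.mul hρmeas.aemeasurable).aestronglyMeasurable
  have hle : ∀ᵐ x ∂(volume.restrict Ω), |c x * f (ψ x)| ^ p * ρ x ≤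
      C * (|deriv ψ x| • (|f (ψ x)| ^ p * ρ (ψ x))) := by
    filter_upwards [hadm] with x hx
    rw [abs_mul, Real.mul_rpow (abs_nonneg _) (abs_nonneg _)]
    have := mul_le_mul_of_nonneg_right hx (Real.rpow_nonneg (abs_nonneg (f (ψ x))) p)
    simp only [smul_eq_mul]
    nlinarith
  have hint : IntegrableOn (fun x => |c x * f (ψ x)| ^ p * ρ x) Ω := by
    refine Integrable.mono' hg' hmeas ?_
    filter_upwards [hle, ae_restrict_mem hΩ.measurableSet] with x hx hxΩ
    rw [Real.norm_of_nonneg]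
    · exact hx
    · have := (hρpos x hxΩ).le
      positivity
  refine ⟨hint, ?_⟩
  calc ∫ x in Ω, |c x * f (ψ x)| ^ p * ρ x
      ≤ ∫ x in Ω, C * (|deriv ψ x| • (|f (ψ x)| ^ p * ρ (ψ x))) :=
        integral_mono_ae hint hg' hle
    _ = C * ∫ x in S, (|deriv ψ x| • (|f (ψ x)| ^ p * ρ (ψ x))) := by
        rw [integral_const_mul, ← hres]
    _ = C * ∫ x in ψ '' S, |f x| ^ p * ρ x := by rw [hgi]
    _ ≤ C * ∫ x in Ω, |f x| ^ p * ρ x := by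
        refine mul_le_mul_of_nonneg_left ?_ hC
        refine setIntegral_mono_set hfi ?_ himg.eventuallyLE
        filter_upwards [ae_restrict_mem hΩ.measurableSet] with x hxΩ
        have := (hρpos x hxΩ).le
        simp only [Pi.zero_apply]
        positivity

/-- The measurable part of the range carrying almost all of Ω. -/
lemma wc_image {Ω : Set ℝ} (hΩ : IsOpen Ω) {ψ : ℝ → ℝ}
    (hinj : Set.InjOn ψ Ω)
    (hdiff : ∀ᵐ x ∂(volume.restrict Ω), DifferentiableAt ℝ ψ x) :
    ∃ D : Set ℝ, MeasurableSet D ∧ D ⊆ ψ '' Ω ∧ ∀ᵐ x ∂(volume.restrict Ω), ψ x ∈ D := by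
  set S : Set ℝ := Ω ∩ {x | DifferentiableAt ℝ ψ x} with hS
  have hSm : MeasurableSet S := hΩ.measurableSet.inter (measurableSet_of_differentiableAt ℝ _)
  refine ⟨ψ '' S, hSm.image_of_continuousOn_injOn (fun x hx =>
      (DifferentiableAt.continuousAt hx.2).continuousWithinAt) (hinj.mono Set.inter_subset_left),
      Set.image_mono Set.inter_subset_left, ?_⟩
  filter_upwards [hdiff, ae_restrict_mem hΩ.measurableSet] with x hx hxΩ
  exact ⟨x, ⟨hxΩ, hx⟩, rfl⟩

/-- Null sets pull back to null sets. -/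
lemma wc_null {Ω : Set ℝ} (hΩ : IsOpen Ω) {p : ℝ} (hp : 1 ≤ p) {c ψ ρ : ℝ → ℝ} {C : ℝ}
    (hcpos : ∀ x, 0 < c x) (hρpos : ∀ x ∈ Ω, 0 < ρ x)
    (hb : ∀ f : ℝ → ℝ, Measurable f → IntegrableOn (fun x => |f x| ^ p * ρ x) Ω →
      IntegrableOn (fun x => |c x * f (ψ x)| ^ p * ρ x) Ω ∧
      ∫ x in Ω, |c x * f (ψ x)| ^ p * ρ x ≤ C * ∫ x in Ω, |f x| ^ p * ρ x)
    {N : Set ℝ} (hN : MeasurableSet N) (hN0 : ∀ᵐ x ∂(volume.restrict Ω), x ∉ N) :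
    ∀ᵐ x ∂(volume.restrict Ω), ψ x ∉ N := by
  have hp0 : p ≠ 0 := by linarith
  have h0 : (fun x => |N.indicator (fun _ => (1:ℝ)) x| ^ p * ρ x) =ᵐ[volume.restrict Ω]
      fun _ => 0 := by
    filter_upwards [hN0] with x hx
    simp [hx, hp0]
  obtain ⟨hi, hle⟩ := hb (N.indicator fun _ => 1) (measurable_const.indicator hN)
    ((integrable_zero _ _ _).congr h0.symm)
  rw [integral_congr_ae h0] at hle
  simp only [integral_zero, mul_zero] at hle
  have hnn : 0 ≤ᵐ[volume.restrict Ω]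
      fun x => |c x * N.indicator (fun _ => (1:ℝ)) (ψ x)| ^ p * ρ x := by
    filter_upwards [ae_restrict_mem hΩ.measurableSet] with x hxΩ
    have := (hρpos x hxΩ).le
    simp only [Pi.zero_apply]
    positivity
  have heq := (setIntegral_eq_zero_iff_of_nonneg_ae hnn hi).1
    (le_antisymm hle (integral_nonneg_of_ae hnn))
  filter_upwards [heq, ae_restrict_mem hΩ.measurableSet] with x hx hxΩ hxN
  have h1 := hρpos x hxΩ
  have h2 := hcpos x
  simp only [Set.indicator_of_mem hxN, mul_one, Pi.zero_apply] at hx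
  have : 0 < |c x| ^ p * ρ x := by positivity
  linarith

/-- Uniform boundedness for positive weighted composition operators (gliding hump). -/
lemma wc_ubp {Ω : Set ℝ} (hΩ : IsOpen Ω) {p : ℝ} (hp : 1 ≤ p) {c ψ : ℝ → ℝ → ℝ} {ρ : ℝ → ℝ}
    {M ω : ℝ} (hM : 1 ≤ M)
    (hcpos : ∀ t x, 0 < c t x) (hρpos : ∀ x ∈ Ω, 0 < ρ x) (hρmeas : Measurable ρ)
    (hb : ∀ t, 0 ≤ t → ∀ f : ℝ → ℝ, Measurable f → IntegrableOn (fun x => |f x| ^ p * ρ x) Ω →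
      IntegrableOn (fun x => |c t x * f (ψ t x)| ^ p * ρ x) Ω ∧
      ∫ x in Ω, |c t x * f (ψ t x)| ^ p * ρ x ≤
        (M * Real.exp (ω * t)) * ∫ x in Ω, |f x| ^ p * ρ x)
    (hst : ∀ f : ℝ → ℝ, Measurable f → IntegrableOn (fun x => |f x| ^ p * ρ x) Ω →
        Tendsto (fun t => ∫ x in Ω, |c t x * f (ψ t x)| ^ p * ρ x) atTop (𝓝 0)) :
    ∃ M : ℝ, ∀ t : ℝ, 0 ≤ t → ∀ f : ℝ → ℝ, Measurable f →
          IntegrableOn (fun x => |f x| ^ p * ρ x) Ω →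
          ∫ x in Ω, |c t x * f (ψ t x)| ^ p * ρ x ≤ M * ∫ x in Ω, |f x| ^ p * ρ x := by
  by_contra! hcon
  have hp0 : p ≠ 0 := by linarith
  have hae := ae_restrict_mem (μ := volume) hΩ.measurableSet
  choose t ht f hfm hfi hlt using fun n : ℕ => hcon (4 ^ n)
  set J : ℕ → ℝ := fun n => ∫ x in Ω, |f n x| ^ p * ρ x with hJ
  have hJ0 : ∀ n, 0 ≤ J n := by
    intro n
    refine integral_nonneg_of_ae ?_
    filter_upwards [hae] with x hx
    have := (hρpos x hx).le
    simp only [Pi.zero_apply]; positivity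
  have hJpos : ∀ n, 0 < J n := by
    intro n
    refine lt_of_le_of_ne (hJ0 n) fun h0 => ?_
    have h1 := (hb (t n) (ht n) (f n) (hfm n) (hfi n)).2
    have h2 := hlt n
    change _ ≤ _ * J n at h1
    change _ * J n < _ at h2
    rw [← h0] at h1 h2
    simp only [mul_zero] at h1 h2
    linarith
  set g : ℕ → ℝ → ℝ := fun n x => (1/2) ^ n / J n * |f n x| ^ p with hg
  have hg0 : ∀ n x, 0 ≤ g n x := fun n x => by
    have := hJ0 n
    simp only [hg]; positivity
  have hgm : ∀ n, Measurable (g n) := fun n => ((hfm n).abs.pow_const p).const_mul _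
  set G : ℝ → ENNReal := fun x => ∑' n, ENNReal.ofReal (g n x) with hG
  have hGm : Measurable G := Measurable.tsum fun n => (hgm n).ennreal_ofReal
  have hGint : ∫⁻ x in Ω, G x * ENNReal.ofReal (ρ x) < ⊤ := by
    have h1 : ∀ n, ∫⁻ x in Ω, ENNReal.ofReal (g n x) * ENNReal.ofReal (ρ x) =
        ENNReal.ofReal ((1/2) ^ n) := by
      intro n
      have h2 : Integrable (fun x => g n x * ρ x) (volume.restrict Ω) := by
        have := (hfi n).const_mul ((1/2) ^ n / J n)
        simpa only [hg, mul_assoc] using this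
      have h3 : ∫ x in Ω, g n x * ρ x = (1/2) ^ n := by
        simp only [hg, mul_assoc]
        rw [integral_const_mul]
        exact div_mul_cancel₀ _ (hJpos n).ne'
      rw [← h3, ofReal_integral_eq_lintegral_ofReal h2]
      · refine lintegral_congr fun x => ?_
        rw [ENNReal.ofReal_mul (hg0 n x)]
      · filter_upwards [hae] with x hx
        exact mul_nonneg (hg0 n x) (hρpos x hx).le
    simp only [hG, ← ENNReal.tsum_mul_right]
    rw [lintegral_tsum (f := fun n x => ENNReal.ofReal (g n x) * ENNReal.ofReal (ρ x)) (fun n =>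
      ((hgm n).ennreal_ofReal.mul hρmeas.ennreal_ofReal).aemeasurable)]
    simp only [h1]
    rw [← ENNReal.ofReal_tsum_of_nonneg (fun n => by positivity) summable_geometric_two]
    exact ENNReal.ofReal_lt_top
  have hGρm : Measurable fun x => G x * ENNReal.ofReal (ρ x) := hGm.mul hρmeas.ennreal_ofReal
  have hGfin : ∀ᵐ x ∂(volume.restrict Ω), x ∉ {x | G x = ⊤} := by
    filter_upwards [ae_lt_top hGρm hGint.ne, hae] with x hx hxΩ hxt
    replace hxt : G x = ⊤ := hxt
    rw [hxt, ENNReal.top_mul] at hx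
    · exact lt_irrefl _ hx
    · simpa using hρpos x hxΩ
  set k : ℝ → ℝ := fun x => (G x).toReal ^ (1 / p) with hk
  have hkm : Measurable k := hGm.ennreal_toReal.pow_const _
  have hkp : ∀ x, |k x| ^ p = (G x).toReal := by
    intro x
    simp only [hk]
    rw [abs_of_nonneg (by positivity), ← Real.rpow_mul ENNReal.toReal_nonneg,
      one_div_mul_cancel hp0, Real.rpow_one]
  have hki : IntegrableOn (fun x => |k x| ^ p * ρ x) Ω := by
    have h1 := integrable_toReal_of_lintegral_ne_top hGρm.aemeasurable hGint.ne
    refine h1.congr ?_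
    filter_upwards [hae] with x hx
    rw [hkp, ENNReal.toReal_mul, ENNReal.toReal_ofReal (hρpos x hx).le]
  -- lower bound
  have hlow : ∀ n, (2:ℝ) ^ n ≤ ∫ x in Ω, |c (t n) x * k (ψ (t n) x)| ^ p * ρ x := by
    intro n
    have hnull := wc_null hΩ hp (hcpos (t n)) hρpos (hb (t n) (ht n))
      (hGm (measurableSet_singleton ⊤)) hGfin
    have h1 : ∫ x in Ω, (1/2) ^ n / J n * (|c (t n) x * f n (ψ (t n) x)| ^ p * ρ x) ≤
        ∫ x in Ω, |c (t n) x * k (ψ (t n) x)| ^ p * ρ x := by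
      refine integral_mono_ae ((hb _ (ht n) _ (hfm n) (hfi n)).1.const_mul _)
        (hb _ (ht n) _ hkm hki).1 ?_
      filter_upwards [hnull, hae] with x hx hxΩ
      have h2 : g n (ψ (t n) x) ≤ (G (ψ (t n) x)).toReal := by
        rw [← ENNReal.ofReal_le_iff_le_toReal hx]
        exact ENNReal.le_tsum n
      rw [abs_mul, abs_mul, Real.mul_rpow (abs_nonneg _) (abs_nonneg _),
        Real.mul_rpow (abs_nonneg _) (abs_nonneg _), hkp]
      have h3 : 0 ≤ |c (t n) x| ^ p * ρ x := by
        have := (hρpos x hxΩ).le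
        positivity
      have h4 := mul_le_mul_of_nonneg_left h2 h3
      simp only [hg] at h4
      nlinarith
    rw [integral_const_mul] at h1
    refine le_trans ?_ h1
    have h5 := (hlt n).le
    change 4 ^ n * J n ≤ _ at h5
    have h6 : 0 ≤ (1/2) ^ n / J n := by have := hJ0 n; positivity
    refine le_trans (le_of_eq ?_) (mul_le_mul_of_nonneg_left h5 h6)
    have := (hJpos n).ne'
    field_simp
    rw [← mul_pow]; norm_num
  obtain ⟨T, hT⟩ := eventually_atTop.1 ((hst k hkm hki).eventually (gt_mem_nhds one_pos))
  have htT : ∀ n, t n < T := by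
    intro n
    by_contra! hle
    have h1 := hT _ hle
    have h2 := hlow n
    have h3 : (1:ℝ) ≤ 2 ^ n := one_le_pow₀ (by norm_num)
    linarith
  obtain ⟨n, hn⟩ := pow_unbounded_of_one_lt (M * Real.exp (|ω| * T)) (by norm_num : (1:ℝ) < 4)
  have h1 := (hb (t n) (ht n) (f n) (hfm n) (hfi n)).2
  have h2 := hlt n
  change _ ≤ _ * J n at h1
  change _ * J n < _ at h2
  have h3 : (4:ℝ) ^ n < M * Real.exp (ω * t n) :=
    lt_of_mul_lt_mul_right (h2.trans_le h1) (hJ0 n)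
  have h4 : ω * t n ≤ |ω| * T :=
    mul_le_mul (le_abs_self ω) (htT n).le (ht n) (abs_nonneg _)
  have h5 : M * Real.exp (ω * t n) ≤ M * Real.exp (|ω| * T) :=
    mul_le_mul_of_nonneg_left (Real.exp_le_exp.2 h4) (by linarith)
  linarith

/-- Corollary: if every point of Ω₁ = {F ≠ 0} eventually leaves φ(t,Ω), then the
weighted composition semigroup T_{F,h} on L^p_ρ(Ω) is stable iff it is bounded and,
whenever λ(Ω₀) > 0, h < 0 a.e. on Ω₀ = {F = 0}. -/
theorem stmt9 (Ω : Set ℝ) (hΩ : IsOpen Ω) (p : ℝ) (hp : 1 ≤ p)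
    (F : ℝ → ℝ) (hF : ContDiffOn ℝ 1 F Ω)
    (h : ℝ → ℝ) (hh : ContinuousOn h Ω)
    (φ : ℝ → ℝ → ℝ)
    (hφ0 : ∀ x ∈ Ω, φ 0 x = x)
    (hmem : ∀ t : ℝ, 0 ≤ t → ∀ x ∈ Ω, φ t x ∈ Ω)
    (hode : ∀ x ∈ Ω, ∀ t : ℝ, 0 ≤ t →
      HasDerivWithinAt (fun s => φ s x) (F (φ t x)) (Set.Ici 0) t)
    (ρ : ℝ → ℝ) (hρpos : ∀ x ∈ Ω, 0 < ρ x) (hρmeas : Measurable ρ)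
    (hρloc : ∀ K : Set ℝ, K ⊆ Ω → IsCompact K → IntegrableOn ρ K)
    (hadm : ∃ M ω : ℝ, 1 ≤ M ∧ ∀ t : ℝ, 0 ≤ t →
      ∀ᵐ x ∂(volume.restrict Ω),
        |cocycle h φ t x| ^ p * ρ x ≤ M * Real.exp (ω * t) * ρ (φ t x) * |deriv (φ t) x|)
    (hleave : ∀ x ∈ Ω, F x ≠ 0 → ∃ tb : ℝ, 0 < tb ∧ x ∉ φ tb '' Ω) :
    (∀ f : ℝ → ℝ, Measurable f → IntegrableOn (fun x => |f x| ^ p * ρ x) Ω →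
        Tendsto (fun t => ∫ x in Ω, |cocycle h φ t x * f (φ t x)| ^ p * ρ x)
          atTop (𝓝 0)) ↔
      ((∃ M : ℝ, ∀ t : ℝ, 0 ≤ t → ∀ f : ℝ → ℝ, Measurable f →
          IntegrableOn (fun x => |f x| ^ p * ρ x) Ω →
          ∫ x in Ω, |cocycle h φ t x * f (φ t x)| ^ p * ρ x ≤
            M * ∫ x in Ω, |f x| ^ p * ρ x) ∧
        (0 < volume {x ∈ Ω | F x = 0} →
          ∀ᵐ x ∂(volume.restrict {x ∈ Ω | F x = 0}), h x < 0)) := by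
  obtain ⟨M, ω, hM, hadm⟩ := hadm
  have hp0 : p ≠ 0 := by linarith
  have hp1 : 0 < p := by linarith
  have hΩm := hΩ.measurableSet
  have hae := ae_restrict_mem (μ := volume) hΩm
  have hcpos : ∀ t x, 0 < cocycle h φ t x := fun t x => Real.exp_pos _
  have hinj : ∀ t, 0 ≤ t → Set.InjOn (φ t) Ω := fun t ht => flow_inj hF hφ0 hmem hode ht
  have hcont : ∀ x ∈ Ω, ContinuousOn (fun s => φ s x) (Set.Ici 0) := fun x hx t ht =>
    (hode x hx t ht).continuousWithinAt
  have hdiff : ∀ t : ℝ, 0 ≤ t → ∀ᵐ x ∂(volume.restrict Ω), DifferentiableAt ℝ (φ t) x := by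
    intro t ht
    filter_upwards [hadm t ht, hae] with x hx hxΩ
    by_contra hnd
    rw [deriv_zero_of_not_differentiableAt hnd] at hx
    have h1 := hρpos x hxΩ
    have h2 := hcpos t x
    have : 0 < |cocycle h φ t x| ^ p * ρ x := by positivity
    simp only [abs_zero, mul_zero] at hx
    linarith
  have hb : ∀ t, 0 ≤ t → ∀ f : ℝ → ℝ, Measurable f →
      IntegrableOn (fun x => |f x| ^ p * ρ x) Ω →
      IntegrableOn (fun x => |cocycle h φ t x * f (φ t x)| ^ p * ρ x) Ω ∧
      ∫ x in Ω, |cocycle h φ t x * f (φ t x)| ^ p * ρ x ≤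
        (M * Real.exp (ω * t)) * ∫ x in Ω, |f x| ^ p * ρ x := by
    intro t ht f hf hfi
    exact wc_bound hΩ (hinj t ht) (hmem t ht) (hdiff t ht)
      (cocycle_aemeas hΩ hh hmem hcont hdiff ht) hρpos hρmeas (by positivity) (hadm t ht) hf hfi
  have hΩ0m : MeasurableSet {x ∈ Ω | F x = 0} := by
    have h1 : IsOpen (Ω ∩ F ⁻¹' {0}ᶜ) := hF.continuousOn.isOpen_inter_preimage hΩ (by simp)
    convert hΩm.diff h1.measurableSet using 1
    ext x; simp
  have hcfix : ∀ t x, 0 ≤ t → x ∈ Ω → F x = 0 → cocycle h φ t x = Real.exp (t * h x) := by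
    intro t x ht hx hFx
    simp only [cocycle]
    congr 1
    rw [intervalIntegral.integral_congr (g := fun _ => h x)]
    · simp
    · intro s hs
      rw [Set.uIcc_of_le ht] at hs
      simp only [flow_fix hF hφ0 hmem hode hs.1 hx hFx]
  constructor
  · intro hst
    refine ⟨wc_ubp hΩ hp hM hcpos hρpos hρmeas hb hst, fun _ => ?_⟩
    rw [ae_restrict_iff' hΩ0m, ae_iff]
    by_contra hne
    set E : Set ℝ := {x | ¬ (x ∈ {x ∈ Ω | F x = 0} → h x < 0)} with hE
    have hEm : MeasurableSet E := by
      have h1 : IsOpen (Ω ∩ h ⁻¹' Set.Iio 0) := hh.isOpen_inter_preimage hΩ isOpen_Iio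
      convert hΩ0m.diff h1.measurableSet using 1
      ext x; simp [hE]; tauto
    obtain ⟨K, hKE, hKc, hK0⟩ := hEm.exists_lt_isCompact (pos_iff_ne_zero.2 hne)
    have hKp : ∀ x ∈ K, x ∈ Ω ∧ F x = 0 ∧ 0 ≤ h x := by
      intro x hx
      have := hKE hx
      simp [hE] at this
      tauto
    have hKΩ : K ⊆ Ω := fun x hx => (hKp x hx).1
    set f : ℝ → ℝ := K.indicator fun _ => 1 with hf
    have hfm : Measurable f := measurable_const.indicator hKc.measurableSet
    have hfρ : ∀ x, |f x| ^ p * ρ x = K.indicator ρ x := by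
      intro x
      by_cases hx : x ∈ K <;> simp [hf, hx, hp0]
    have hfi : IntegrableOn (fun x => |f x| ^ p * ρ x) Ω := by
      simp only [hfρ]
      exact ((integrable_indicator_iff hKc.measurableSet).2 (hρloc K hKΩ hKc)).integrableOn
    have hpos : 0 < ∫ x in K, ρ x := by
      rw [setIntegral_pos_iff_support_of_nonneg_ae _ (hρloc K hKΩ hKc)]
      · refine lt_of_lt_of_le hK0 (measure_mono fun x hx => ⟨(hρpos x (hKΩ hx)).ne', hx⟩)
      · filter_upwards [ae_restrict_mem hKc.measurableSet] with x hx
        exact (hρpos x (hKΩ hx)).le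
    have hlow : ∀ t, 0 ≤ t → ∫ x in K, ρ x ≤
        ∫ x in Ω, |cocycle h φ t x * f (φ t x)| ^ p * ρ x := by
      intro t ht
      have h1 : ∫ x in K, ρ x = ∫ x in Ω, |f x| ^ p * ρ x := by
        simp only [hfρ]
        rw [setIntegral_indicator hKc.measurableSet, Set.inter_eq_self_of_subset_right hKΩ]
      rw [h1]
      refine integral_mono_ae hfi (hb t ht f hfm hfi).1 ?_
      filter_upwards [hae] with x hxΩ
      have hρx := (hρpos x hxΩ).le
      by_cases hx : x ∈ K
      · obtain ⟨-, h2, h3⟩ := hKp x hx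
        simp only [flow_fix hF hφ0 hmem hode ht hxΩ h2, hcfix t x ht hxΩ h2]
        refine mul_le_mul_of_nonneg_right ?_ hρx
        refine Real.rpow_le_rpow (abs_nonneg _) ?_ hp1.le
        rw [abs_mul, abs_of_pos (Real.exp_pos _)]
        exact le_mul_of_one_le_left (abs_nonneg _) (Real.one_le_exp (mul_nonneg ht h3))
      · rw [hfρ, Set.indicator_of_notMem hx]
        positivity
    have := ge_of_tendsto (hst f hfm hfi) ((eventually_ge_atTop 0).mono hlow)
    linarith
  · rintro ⟨⟨B, hB⟩, hneg⟩ f hfm hfi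
    have hneg' : ∀ᵐ x ∂(volume.restrict Ω), F x = 0 → h x < 0 := by
      have h1 : ∀ᵐ x ∂(volume.restrict {x ∈ Ω | F x = 0}), h x < 0 := by
        rcases eq_or_ne (volume {x ∈ Ω | F x = 0}) 0 with h0 | h0
        · rw [Measure.restrict_eq_zero.2 h0]; simp
        · exact hneg (pos_iff_ne_zero.2 h0)
      rw [ae_restrict_iff' hΩ0m] at h1
      rw [ae_restrict_iff' hΩm]
      filter_upwards [h1] with x hx hxΩ hFx
      exact hx ⟨hxΩ, hFx⟩
    -- measurable ranges
    have hD : ∀ t, ∃ D : Set ℝ, 0 ≤ t → MeasurableSet D ∧ D ⊆ φ t '' Ω ∧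
        ∀ᵐ x ∂(volume.restrict Ω), φ t x ∈ D := by
      intro t
      by_cases ht : 0 ≤ t
      · obtain ⟨D, hD⟩ := wc_image hΩ (hinj t ht) (hdiff t ht)
        exact ⟨D, fun _ => hD⟩
      · exact ⟨∅, fun h => absurd h ht⟩
    choose D hD using hD
    set Z : Set ℝ := {x ∈ Ω | F x = 0} with hZ
    have hind : ∀ (A : Set ℝ), (fun x => |A.indicator f x| ^ p * ρ x) =
        A.indicator fun x => |f x| ^ p * ρ x := by
      intro A
      ext x
      by_cases hx : x ∈ A <;> simp [hx, hp0]
    have hindi : ∀ A : Set ℝ, MeasurableSet A →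
        IntegrableOn (fun x => |A.indicator f x| ^ p * ρ x) Ω := by
      intro A hA
      rw [hind]
      exact Integrable.indicator hfi hA
    set A : ℝ → Set ℝ := fun t => D t \ Z with hA
    have hAm : ∀ t, 0 ≤ t → MeasurableSet (A t) := fun t ht => (hD t ht).1.diff hΩ0m
    have hsplit : ∀ t, 0 ≤ t → ∫ x in Ω, |cocycle h φ t x * f (φ t x)| ^ p * ρ x =
        (∫ x in Ω, |cocycle h φ t x * (A t).indicator f (φ t x)| ^ p * ρ x) +
        ∫ x in Ω, |cocycle h φ t x * Z.indicator f (φ t x)| ^ p * ρ x := by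
      intro t ht
      rw [← integral_add (hb t ht _ (hfm.indicator (hAm t ht)) (hindi _ (hAm t ht))).1
        (hb t ht _ (hfm.indicator hΩ0m) (hindi _ hΩ0m)).1]
      refine integral_congr_ae ?_
      filter_upwards [(hD t ht).2.2] with x hx
      by_cases hxZ : φ t x ∈ Z
      · have : φ t x ∉ A t := fun h => h.2 hxZ
        simp [hxZ, this, hp0]
      · have : φ t x ∈ A t := ⟨hx, hxZ⟩
        simp [hxZ, this, hp0]
    have hnn : ∀ x ∈ Ω, 0 ≤ |f x| ^ p * ρ x := fun x hx => by
      have := (hρpos x hx).le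
      positivity
    have hAlim : Tendsto (fun t => ∫ x in Ω, |(A t).indicator f x| ^ p * ρ x) atTop (𝓝 0) := by
      have h0 : ∫ x in Ω, (0:ℝ) = 0 := by simp
      rw [← h0]
      refine tendsto_integral_filter_of_dominated_convergence (fun x => |f x| ^ p * ρ x) ?_ ?_
        hfi ?_
      · filter_upwards [eventually_ge_atTop 0] with t ht
        exact (hindi _ (hAm t ht)).aestronglyMeasurable
      · refine Eventually.of_forall fun t => ?_
        filter_upwards [hae] with x hx
        have h1 : |(A t).indicator f x| ^ p * ρ x =
          (A t).indicator (fun x => |f x| ^ p * ρ x) x := congrFun (hind (A t)) x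
        rw [h1]
        refine (norm_indicator_le_norm_self _ _).trans ?_
        rw [Real.norm_of_nonneg (hnn x hx)]
      · filter_upwards [hae] with x hx
        refine tendsto_const_nhds.congr' ?_
        by_cases hFx : F x = 0
        · refine Eventually.of_forall fun t => ?_
          have : x ∉ A t := fun h => h.2 ⟨hx, hFx⟩
          simp [this, hp0]
        · obtain ⟨tb, htb, hxt⟩ := hleave x hx hFx
          filter_upwards [eventually_ge_atTop tb] with t ht
          have ht0 : 0 ≤ t := htb.le.trans ht
          have : x ∉ A t := by
            intro h
            obtain ⟨y, hy, hyx⟩ := (hD t ht0).2.1 h.1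
            refine hxt ⟨φ (t - tb) y, hmem _ (sub_nonneg.2 ht) y hy, ?_⟩
            rw [← flow_add hF hφ0 hmem hode (sub_nonneg.2 ht) htb.le hy, ← hyx]
            congr 1; ring
          simp [this, hp0]
    have h1 : Tendsto (fun t => ∫ x in Ω, |cocycle h φ t x * (A t).indicator f (φ t x)| ^ p * ρ x)
        atTop (𝓝 0) := by
      refine tendsto_of_tendsto_of_tendsto_of_le_of_le' tendsto_const_nhds
        (by simpa using hAlim.const_mul B) ?_ ?_
      · refine Eventually.of_forall fun t => integral_nonneg_of_ae ?_
        filter_upwards [hae] with x hx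
        have := (hρpos x hx).le
        simp only [Pi.zero_apply]; positivity
      · filter_upwards [eventually_ge_atTop 0] with t ht
        exact hB t ht _ (hfm.indicator (hAm t ht)) (hindi _ (hAm t ht))
    have h2 : Tendsto (fun t => ∫ x in Ω, |cocycle h φ t x * Z.indicator f (φ t x)| ^ p * ρ x)
        atTop (𝓝 0) := by
      have h0 : ∫ x in Ω, (0:ℝ) = 0 := by simp
      have hval : ∀ t, 0 ≤ t → ∀ x ∈ Ω, |cocycle h φ t x * Z.indicator f (φ t x)| ^ p * ρ x =
          Z.indicator (fun x => Real.exp (t * h x) ^ p * (|f x| ^ p * ρ x)) x := by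
        intro t ht x hx
        by_cases hxZ : φ t x ∈ Z
        · have hxx : φ t x = x :=
            hinj t ht (hmem t ht x hx) hx (flow_fix hF hφ0 hmem hode ht hxZ.1 hxZ.2)
          have hxZ' : x ∈ Z := hxx ▸ hxZ
          rw [Set.indicator_of_mem hxZ', Set.indicator_of_mem hxZ, hxx,
            hcfix t x ht hx hxZ'.2, abs_mul, Real.mul_rpow (abs_nonneg _) (abs_nonneg _),
            abs_of_pos (Real.exp_pos _), mul_assoc]
        · have hxZ' : x ∉ Z := fun h => hxZ (by
            rwa [flow_fix hF hφ0 hmem hode ht h.1 h.2])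
          simp [hxZ, hxZ', hp0]
      rw [← h0]
      refine tendsto_integral_filter_of_dominated_convergence (fun x => |f x| ^ p * ρ x) ?_ ?_
        hfi ?_
      · filter_upwards [eventually_ge_atTop 0] with t ht
        exact (hb t ht _ (hfm.indicator hΩ0m) (hindi _ hΩ0m)).1.aestronglyMeasurable
      · filter_upwards [eventually_ge_atTop 0] with t ht
        filter_upwards [hae, hneg'] with x hx hxn
        rw [hval t ht x hx]
        by_cases hxZ : x ∈ Z
        · rw [Set.indicator_of_mem hxZ,
            Real.norm_of_nonneg (mul_nonneg (by positivity) (hnn x hx))]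
          refine mul_le_of_le_one_left (hnn x hx) ?_
          refine Real.rpow_le_one (Real.exp_pos _).le ?_ hp1.le
          exact Real.exp_le_one_iff.2 (mul_nonpos_of_nonneg_of_nonpos ht (hxn hxZ.2).le)
        · rw [Set.indicator_of_notMem hxZ, norm_zero]
          exact hnn x hx
      · filter_upwards [hae, hneg'] with x hx hxn
        have he : (fun t => Z.indicator (fun x => Real.exp (t * h x) ^ p * (|f x| ^ p * ρ x)) x)
            =ᶠ[atTop] fun t => |cocycle h φ t x * Z.indicator f (φ t x)| ^ p * ρ x := by
          filter_upwards [eventually_ge_atTop 0] with t ht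
          exact (hval t ht x hx).symm
        refine Tendsto.congr' he ?_
        by_cases hxZ : x ∈ Z
        · simp only [Set.indicator_of_mem hxZ]
          have h3 : Tendsto (fun t : ℝ => Real.exp (t * h x)) atTop (𝓝 0) :=
            Real.tendsto_exp_atBot.comp (tendsto_id.atTop_mul_const_of_neg (hxn hxZ.2))
          have h4 := (h3.rpow_const (p := p) (Or.inr hp1.le)).mul_const (|f x| ^ p * ρ x)
          rwa [Real.zero_rpow hp0, zero_mul] at h4
        · simp only [Set.indicator_of_notMem hxZ]
          exact tendsto_const_nhds
    have h3 := h1.add h2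
    rw [add_zero] at h3
    refine h3.congr' ?_
    filter_upwards [eventually_ge_atTop 0] with t ht
    exact (hsplit t ht).symm
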